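/- For every prime power q ≥ 2, the pure gap set of the GK function field at P₀ and P_∞ has cardinality |G₀(P₀,P_∞)| = q(q−1)(10q^8+10q^7−25q^6−9q^5+71q^4−111q^3−86q^2+128q−12)/120. -/

import Mathlib

/-!
Write `m = q² - q + 1` and `π = q³ + 1 = (q + 1) m`. The equations of the curve force
`v(y) = (m, -qm)` and `v(z) = (1, -q³)` at `(P₀, P_∞)`, while `x` has divisor `π (P₀ - P_∞)`.
Every residue modulo `π` is uniquely `-n` with `n = i m + j`, `0 ≤ i ≤ q`, `0 ≤ j < m`, and the
monomials `y ^ i * z ^ j * x ^ t` have pole orders `≡ -n` at both places, with sum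
`(i + j) π - 2 n`.

This sum is minimal: any function regular outside the two places whose pole order at one of them
is `≡ -n` has total pole order at least `(i + j) π - 2 n`. If it were smaller, multiplying by
`y ^ (q - i) * z ^ (q² - q - j)` and a power of `x` would give a function whose only pole, at that
place, has order `2g - 1 = (q² - 2) π + 1`, a gap at both `P₀` and `P_∞`. This argument
(`degree_bound_P0`, `degree_bound_Pinf`) needs only the two gap sets, and no residue fields.

Hence `(s₁, s₂)` is a pure gap iff `s₁ + s₂ < (iₐ + jₐ) π - 2 nₐ` for `a = 1, 2`
(`pureGap_iff`). Writing `sₐ = cₐ π - nₐ`, this becomes `c₁, c₂ ≥ 1` and `c₁ + c₂ ≤ M` with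
`M = gkM m n₁ n₂` depending only on the residues, so each pair of residues contributes
`M (M - 1) / 2` pure gaps. Summing over residues, split into the diagonal and twice the part
`n₁ < n₂`, gives the polynomial (`sum_gkM`).
-/

/-- An abstract algebraic function field of one variable, presented through the
discrete valuations `v P` attached to its places, together with its genus. -/
structure FnField where
  F : Type
  [fieldF : Field F]
  Place : Type
  /-- the (normalized discrete) valuation at each place -/
  v : Place → F → ℤ
  v_one : ∀ P, v P 1 = 0
  v_mul : ∀ P (x y : F), x ≠ 0 → y ≠ 0 → v P (x * y) = v P x + v P y
  v_add : ∀ P (x y : F), x ≠ 0 → y ≠ 0 → x + y ≠ 0 → min (v P x) (v P y) ≤ v P (x + y)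
  finite_supp : ∀ x : F, x ≠ 0 → {P | v P x ≠ 0}.Finite
  deg_zero : ∀ x : F, x ≠ 0 → ∀ s : Finset Place, {P | v P x ≠ 0} ⊆ s → ∑ P ∈ s, v P x = 0
  genus : ℕ
  /-- the number of gaps at any place equals the genus (Weierstrass gap theorem) -/
  genus_spec : ∀ P,
    {s : ℕ | ¬ ∃ x : F, x ≠ 0 ∧ v P x = -(s : ℤ) ∧ ∀ Q, Q ≠ P → 0 ≤ v Q x}.ncard = genus

attribute [instance] FnField.fieldF

namespace FnField

variable (C : FnField)

/-- `(s₁, s₂) ∈ H(P₁, P₂)`: there is a function with pole divisor `s₁P₁ + s₂P₂`. -/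
def Hpair (P1 P2 : C.Place) (s : ℕ × ℕ) : Prop :=
  ∃ x : C.F, x ≠ 0 ∧ C.v P1 x = -(s.1 : ℤ) ∧ C.v P2 x = -(s.2 : ℤ) ∧
    ∀ Q, Q ≠ P1 → Q ≠ P2 → 0 ≤ C.v Q x

/-- `s ∈ H(P)`: there is a function with pole divisor `sP`. -/
def Hone (P : C.Place) (s : ℕ) : Prop :=
  ∃ x : C.F, x ≠ 0 ∧ C.v P x = -(s : ℤ) ∧ ∀ Q, Q ≠ P → 0 ≤ C.v Q x

/-- `s` is a gap at `P`. -/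
def Gap (P : C.Place) (s : ℕ) : Prop := ¬ C.Hone P s

/-- `τ(β) = min {γ : (β, γ) ∈ H(P₁, P₂)}`. -/
noncomputable def tau (P1 P2 : C.Place) (β : ℕ) : ℕ := sInf {γ : ℕ | C.Hpair P1 P2 (β, γ)}

/-- `k (P₁ - P₂)` is a principal divisor. -/
def IsPrincipalDiff (P1 P2 : C.Place) (k : ℤ) : Prop :=
  ∃ x : C.F, x ≠ 0 ∧ C.v P1 x = k ∧ C.v P2 x = -k ∧ ∀ Q, Q ≠ P1 → Q ≠ P2 → C.v Q x = 0

/-- the period `π` of `H(P₁, P₂)`: the least `k > 0` with `k(P₁ - P₂)` principal. -/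
noncomputable def period (P1 P2 : C.Place) : ℕ := sInf {k : ℕ | 0 < k ∧ C.IsPrincipalDiff P1 P2 (k : ℤ)}

/-- the minimal generating set `Γ(P₁,P₂) = {(β, τ(β)) : β ∈ G(P₁)}`. -/
def GammaSet (P1 P2 : C.Place) : Set (ℕ × ℕ) :=
  {p | C.Gap P1 p.1 ∧ p.2 = C.tau P1 P2 p.1}

/-- `Γ_{k₁,k₂} = Γ(P₁,P₂) ∩ ((k₁π, (k₁+1)π] × (k₂π, (k₂+1)π])`. -/
def GammaPart (P1 P2 : C.Place) (k1 k2 : ℕ) : Set (ℕ × ℕ) :=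
  {p | p ∈ C.GammaSet P1 P2 ∧
    k1 * C.period P1 P2 < p.1 ∧ p.1 ≤ (k1 + 1) * C.period P1 P2 ∧
    k2 * C.period P1 P2 < p.2 ∧ p.2 ≤ (k2 + 1) * C.period P1 P2}

/-- `(s₁,s₂)` is a pure gap at `P₁,P₂`, i.e. `ℓ(s₁P₁+s₂P₂) = ℓ((s₁-1)P₁+(s₂-1)P₂)`,
formulated as: no function in `L(s₁P₁+s₂P₂)` attains the exact pole order `s₁` at `P₁`,
nor the exact pole order `s₂` at `P₂`. -/
def PureGap (P1 P2 : C.Place) (s : ℕ × ℕ) : Prop :=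
  (¬ ∃ x : C.F, x ≠ 0 ∧ C.v P1 x = -(s.1 : ℤ) ∧ -(s.2 : ℤ) ≤ C.v P2 x ∧
      ∀ Q, Q ≠ P1 → Q ≠ P2 → 0 ≤ C.v Q x) ∧
  (¬ ∃ x : C.F, x ≠ 0 ∧ C.v P2 x = -(s.2 : ℤ) ∧ -(s.1 : ℤ) ≤ C.v P1 x ∧
      ∀ Q, Q ≠ P1 → Q ≠ P2 → 0 ≤ C.v Q x)

/-- the pure gap set `G₀(P₁,P₂)`. -/
def PureGapSet (P1 P2 : C.Place) : Set (ℕ × ℕ) := {s | C.PureGap P1 P2 s}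

/-- `G_{k₁,k₂} = G₀(P₁,P₂) ∩ ((k₁π, (k₁+1)π] × (k₂π, (k₂+1)π])`. -/
def PureGapPart (P1 P2 : C.Place) (k1 k2 : ℕ) : Set (ℕ × ℕ) :=
  {p | p ∈ C.PureGapSet P1 P2 ∧
    k1 * C.period P1 P2 < p.1 ∧ p.1 ≤ (k1 + 1) * C.period P1 P2 ∧
    k2 * C.period P1 P2 < p.2 ∧ p.2 ≤ (k2 + 1) * C.period P1 P2}

end FnField

/-- componentwise minimum (greatest lower bound) on `ℕ × ℕ`. -/
def glb (u v : ℕ × ℕ) : ℕ × ℕ := (min u.1 v.1, min u.2 v.2)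

/-- `u ⋠ v` for the componentwise partial order on `ℕ × ℕ`. -/
def notPrec (u v : ℕ × ℕ) : Prop := v.1 < u.1 ∨ v.2 < u.2

namespace FnField

variable (C : FnField)

/-- `G¹_{k,0} = {glb(u,v) : u ∈ Γ_{k,k₂}, v ∈ Γ_{k₁,0}, k < k₁, 0 < k₂}`. -/
def G1part (P1 P2 : C.Place) (k : ℕ) : Set (ℕ × ℕ) :=
  {p | ∃ u v k1 k2, u ∈ C.GammaPart P1 P2 k k2 ∧ v ∈ C.GammaPart P1 P2 k1 0 ∧
    k < k1 ∧ 0 < k2 ∧ p = glb u v}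

/-- `G²_{k,0} = {glb(u,v) : u, v ∈ Γ_{k,0}, u ⋠ v, v ⋠ u}`. -/
def G2part (P1 P2 : C.Place) (k : ℕ) : Set (ℕ × ℕ) :=
  {p | ∃ u v, u ∈ C.GammaPart P1 P2 k 0 ∧ v ∈ C.GammaPart P1 P2 k 0 ∧
    notPrec u v ∧ notPrec v u ∧ p = glb u v}

/-- `G³_{k,0} = {glb(u,v) : u ∈ Γ_{k,0}, v ∈ Γ_{k₁,0}, u ⋠ v, k < k₁}`. -/
def G3part (P1 P2 : C.Place) (k : ℕ) : Set (ℕ × ℕ) :=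
  {p | ∃ u v k1, u ∈ C.GammaPart P1 P2 k 0 ∧ v ∈ C.GammaPart P1 P2 k1 0 ∧
    notPrec u v ∧ k < k1 ∧ p = glb u v}

/-- `G⁴_{k,0} = {glb(u,v) : u ∈ Γ_{k,k₂}, v ∈ Γ_{k,0}, v ⋠ u, 0 < k₂}`. -/
def G4part (P1 P2 : C.Place) (k : ℕ) : Set (ℕ × ℕ) :=
  {p | ∃ u v k2, u ∈ C.GammaPart P1 P2 k k2 ∧ v ∈ C.GammaPart P1 P2 k 0 ∧
    notPrec v u ∧ 0 < k2 ∧ p = glb u v}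

end FnField

/-- The Giulietti–Korchmáros function field over the algebraic closure of `𝔽_{q⁶}`,
presented through its defining equations and the standard facts about the places
`P₀ = (0,0,0)` and `P_∞` used in the paper. -/
structure GKData (q : ℕ) extends FnField where
  x : F
  y : F
  z : F
  P0 : Place
  Pinf : Place
  P0_ne_Pinf : P0 ≠ Pinf
  x_ne : x ≠ 0
  eq1 : y ^ (q + 1) = x ^ q + x
  eq2 : z ^ (q ^ 2 - q + 1) =
    y * ∑ i ∈ Finset.range (q + 1), (-1 : F) ^ (i + 1) * x ^ (i * (q - 1))
  /-- the principal divisor `(x) = (q³+1) P₀ - (q³+1) P_∞` -/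
  x_div_P0 : v P0 x = (q ^ 3 + 1 : ℤ)
  x_div_Pinf : v Pinf x = -((q : ℤ) ^ 3 + 1)
  x_div_other : ∀ Q, Q ≠ P0 → Q ≠ Pinf → v Q x = 0
  /-- `H(P_∞) = ⟨q³ - q² + q, q³, q³ + 1⟩` -/
  Hinf_gen : ∀ s : ℕ, FnField.Hone toFnField Pinf s ↔
    ∃ a b c : ℕ, s = a * (q ^ 3 - q ^ 2 + q) + b * q ^ 3 + c * (q ^ 3 + 1)
  /-- the genus is `(1/2)(q³+1)(q²-2) + 1` -/
  genus_eq : 2 * genus = (q ^ 3 + 1) * (q ^ 2 - 2) + 2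
  /-- the minimal generating set `Γ(P₀, P_∞)` (Castellanos–Tizziotti) -/
  gamma_desc : FnField.GammaSet toFnField P0 Pinf =
    {p : ℕ × ℕ | ∃ k i j : ℕ, 1 ≤ k ∧ k ≤ q ^ 2 - 1 ∧
      k - (q ^ 2 - q - 1) ≤ i ∧ i ≤ q ∧ k + 1 - i ≤ j ∧ j ≤ q ^ 2 - q ∧
      p = ((k - 1) * (q ^ 3 + 1) + (q + 1 - i) * (q ^ 2 - q + 1) - j,
           (i + j - (k + 1)) * (q ^ 3 + 1) + (q + 1 - i) * (q ^ 2 - q + 1) - j)}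

/-! ### Valuations of sums and powers -/

namespace FnField

variable (C : FnField) (P : C.Place)

lemma v_neg_one : C.v P (-1) = 0 := by
  have h := C.v_mul P (-1) (-1) (neg_ne_zero.2 one_ne_zero) (neg_ne_zero.2 one_ne_zero)
  rw [neg_mul_neg, one_mul, C.v_one] at h
  omega

lemma v_neg {f : C.F} (hf : f ≠ 0) : C.v P (-f) = C.v P f := by
  rw [← neg_one_mul, C.v_mul P _ _ (neg_ne_zero.2 one_ne_zero) hf, v_neg_one, zero_add]

lemma v_pow {f : C.F} (hf : f ≠ 0) (n : ℕ) : C.v P (f ^ n) = n * C.v P f := by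
  induction n with
  | zero => simp [C.v_one]
  | succ n ih =>
    rw [pow_succ, C.v_mul P _ _ (pow_ne_zero n hf) hf, ih]
    push_cast
    ring

lemma v_inv {f : C.F} (hf : f ≠ 0) : C.v P f⁻¹ = -C.v P f := by
  have h := C.v_mul P f f⁻¹ hf (inv_ne_zero hf)
  rw [mul_inv_cancel₀ hf, C.v_one] at h
  omega

lemma v_zpow {f : C.F} (hf : f ≠ 0) (n : ℤ) : C.v P (f ^ n) = n * C.v P f := by
  cases n with
  | ofNat n => simpa using C.v_pow P hf n
  | negSucc n =>
    rw [zpow_negSucc, C.v_inv P (pow_ne_zero _ hf), C.v_pow P hf, Int.negSucc_eq]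
    push_cast
    ring

/-- The ultrametric equality: the term of strictly smaller valuation dominates. -/
lemma v_add_of_lt {f g : C.F} (hf : f ≠ 0) (hg : g ≠ 0) (h : C.v P f < C.v P g) :
    f + g ≠ 0 ∧ C.v P (f + g) = C.v P f := by
  have hne : f + g ≠ 0 := by
    intro h0
    rw [eq_neg_of_add_eq_zero_right h0, C.v_neg P hf] at h
    exact lt_irrefl _ h
  refine ⟨hne, ?_⟩
  have h1 := C.v_add P f g hf hg hne
  have h2 := C.v_add P (f + g) (-g) hne (neg_ne_zero.2 hg) (by simpa using hf)
  rw [add_neg_cancel_right, C.v_neg P hg] at h2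
  omega

/-- The `i`-th term of the alternating sum in the equation for `z`. -/
lemma v_altTerm {f : C.F} (hf : f ≠ 0) (d i : ℕ) :
    (-1 : C.F) ^ (i + 1) * f ^ (i * d) ≠ 0 ∧
      C.v P ((-1 : C.F) ^ (i + 1) * f ^ (i * d)) = i * d * C.v P f := by
  have h1 : (-1 : C.F) ^ (i + 1) ≠ 0 := pow_ne_zero _ (neg_ne_zero.2 one_ne_zero)
  refine ⟨mul_ne_zero h1 (pow_ne_zero _ hf), ?_⟩
  rw [C.v_mul P _ _ h1 (pow_ne_zero _ hf), C.v_pow P hf,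
    C.v_pow P (neg_ne_zero.2 one_ne_zero), v_neg_one]
  push_cast
  ring

lemma v_altSum_of_pos {f : C.F} (hf : f ≠ 0) (hv : 0 < C.v P f) (d : ℕ) (hd : 0 < d) (n : ℕ) :
    ∑ i ∈ Finset.range (n + 1), (-1 : C.F) ^ (i + 1) * f ^ (i * d) ≠ 0 ∧
      C.v P (∑ i ∈ Finset.range (n + 1), (-1 : C.F) ^ (i + 1) * f ^ (i * d)) = 0 := by
  induction n with
  | zero => simp [v_neg_one]
  | succ n ih =>
    obtain ⟨t0, tv⟩ := C.v_altTerm P hf d (n + 1)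
    rw [Finset.sum_range_succ]
    have := C.v_add_of_lt P ih.1 t0 (by rw [ih.2, tv]; positivity)
    exact ⟨this.1, this.2.trans ih.2⟩

lemma v_altSum_of_neg {f : C.F} (hf : f ≠ 0) (hv : C.v P f < 0) (d : ℕ) (hd : 0 < d) (n : ℕ) :
    ∑ i ∈ Finset.range (n + 1), (-1 : C.F) ^ (i + 1) * f ^ (i * d) ≠ 0 ∧
      C.v P (∑ i ∈ Finset.range (n + 1), (-1 : C.F) ^ (i + 1) * f ^ (i * d)) =
        n * d * C.v P f := by
  induction n with
  | zero => simp [v_neg_one]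
  | succ n ih =>
    obtain ⟨t0, tv⟩ := C.v_altTerm P hf d (n + 1)
    rw [Finset.sum_range_succ, add_comm]
    have hd' : (0 : ℤ) < d := by exact_mod_cast hd
    have := C.v_add_of_lt P t0 ih.1 (by rw [ih.2, tv]; push_cast; nlinarith)
    exact ⟨this.1, this.2.trans tv⟩

lemma v_altSum_nonneg {f : C.F} (hf : f ≠ 0) (hv : C.v P f = 0) (d n : ℕ)
    (h0 : ∑ i ∈ Finset.range n, (-1 : C.F) ^ (i + 1) * f ^ (i * d) ≠ 0) :
    0 ≤ C.v P (∑ i ∈ Finset.range n, (-1 : C.F) ^ (i + 1) * f ^ (i * d)) := by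
  induction n with
  | zero => simp at h0
  | succ n ih =>
    obtain ⟨t0, tv⟩ := C.v_altTerm P hf d n
    rw [hv, mul_zero] at tv
    rw [Finset.sum_range_succ] at h0 ⊢
    by_cases hs : ∑ i ∈ Finset.range n, (-1 : C.F) ^ (i + 1) * f ^ (i * d) = 0
    · rw [hs, zero_add, tv]
    · have := C.v_add P _ _ hs t0 h0
      rw [tv] at this
      exact le_trans (le_min (ih hs) le_rfl) this

end FnField

/-! ### The monomials in `x`, `y`, `z` -/

namespace GKData

variable {q : ℕ} (C : GKData q)

lemma y_data (hq : 2 ≤ q) :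
    C.y ≠ 0 ∧ C.v C.P0 C.y = (q : ℤ) ^ 2 - q + 1 ∧
      C.v C.Pinf C.y = -((q : ℤ) * ((q : ℤ) ^ 2 - q + 1)) ∧
      ∀ Q, Q ≠ C.P0 → Q ≠ C.Pinf → 0 ≤ C.v Q C.y := by
  have hq' : (2 : ℤ) ≤ q := by exact_mod_cast hq
  have hx := C.x_ne
  have hxq : C.x ^ q ≠ 0 := pow_ne_zero _ hx
  have hpos : (0 : ℤ) < (q : ℤ) ^ 3 + 1 := by positivity
  obtain ⟨hs, hs0⟩ := C.v_add_of_lt C.P0 hx hxq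
    (by rw [C.v_pow _ hx, C.x_div_P0]; nlinarith)
  have hsi := (C.v_add_of_lt C.Pinf hxq hx
    (by rw [C.v_pow _ hx, C.x_div_Pinf]; nlinarith)).2
  have hy : C.y ≠ 0 := by
    intro h
    have h1 := C.eq1
    rw [h, zero_pow (by omega), add_comm] at h1
    exact hs h1.symm
  have hvy : ∀ Q, ((q : ℤ) + 1) * C.v Q C.y = C.v Q (C.x ^ q + C.x) := by
    intro Q
    rw [← C.eq1, C.v_pow _ hy]
    push_cast
    ring
  have hne : ((q : ℤ) + 1) ≠ 0 := by positivity
  refine ⟨hy, mul_left_cancel₀ hne ?_, mul_left_cancel₀ hne ?_, fun Q h0 hi => ?_⟩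
  · rw [hvy, add_comm, hs0, C.x_div_P0]
    ring
  · rw [hvy, hsi, C.v_pow _ hx, C.x_div_Pinf]
    ring
  · have h1 := C.v_add Q _ _ hxq hx (by rwa [add_comm])
    rw [C.v_pow _ hx, C.x_div_other Q h0 hi, mul_zero, min_self, ← hvy] at h1
    exact nonneg_of_mul_nonneg_right h1 (by positivity)

lemma z_data (hq : 2 ≤ q) :
    C.z ≠ 0 ∧ C.v C.P0 C.z = 1 ∧ C.v C.Pinf C.z = -((q : ℤ) ^ 3) ∧
      ∀ Q, Q ≠ C.P0 → Q ≠ C.Pinf → 0 ≤ C.v Q C.z := by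
  obtain ⟨hy, hy0, hyi, hyQ⟩ := C.y_data hq
  have hqm : 2 * q ≤ q ^ 2 := by nlinarith
  have hcast : ((q ^ 2 - q + 1 : ℕ) : ℤ) = (q : ℤ) ^ 2 - q + 1 := by
    rw [Nat.cast_add, Nat.cast_sub (by omega)]
    push_cast
    ring
  have hcast1 : ((q - 1 : ℕ) : ℤ) = (q : ℤ) - 1 := by omega
  have hx := C.x_ne
  obtain ⟨hs, hs0⟩ := C.v_altSum_of_pos C.P0 hx (by rw [C.x_div_P0]; positivity) (q - 1)
    (by omega) q
  have hsi := (C.v_altSum_of_neg C.Pinf hx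
    (by rw [C.x_div_Pinf]; exact neg_neg_of_pos (by positivity)) (q - 1) (by omega) q).2
  have hz : C.z ≠ 0 := by
    intro h
    have h1 := C.eq2
    rw [h, zero_pow (by omega)] at h1
    exact mul_ne_zero hy hs h1.symm
  have hvz : ∀ Q, ((q : ℤ) ^ 2 - q + 1) * C.v Q C.z = C.v Q C.y +
      C.v Q (∑ i ∈ Finset.range (q + 1), (-1 : C.F) ^ (i + 1) * C.x ^ (i * (q - 1))) := by
    intro Q
    rw [← C.v_mul Q _ _ hy hs, ← C.eq2, C.v_pow _ hz, hcast]
  have hpos : (0 : ℤ) < (q : ℤ) ^ 2 - q + 1 := by rw [← hcast]; positivity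
  refine ⟨hz, mul_left_cancel₀ hpos.ne' ?_, mul_left_cancel₀ hpos.ne' ?_, fun Q h0 hi => ?_⟩
  · rw [hvz, hs0, hy0]
    ring
  · rw [hvz, hsi, hyi, C.x_div_Pinf, hcast1]
    ring
  · refine nonneg_of_mul_nonneg_right (a := (q : ℤ) ^ 2 - q + 1) ?_ hpos
    rw [hvz]
    exact add_nonneg (hyQ Q h0 hi)
      (C.v_altSum_nonneg Q hx (C.x_div_other Q h0 hi) _ _ hs)

/-- Multiplication by the monomial `y ^ u * z ^ w * x ^ t`. -/
lemma exists_mul_monomial (hq : 2 ≤ q) (f : C.F) (hf : f ≠ 0) (u w : ℕ) (t : ℤ) :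
    ∃ g : C.F, g ≠ 0 ∧
      C.v C.P0 g = C.v C.P0 f + u * ((q : ℤ) ^ 2 - q + 1) + w + t * ((q : ℤ) ^ 3 + 1) ∧
      C.v C.Pinf g = C.v C.Pinf f - u * ((q : ℤ) * ((q : ℤ) ^ 2 - q + 1)) - w * (q : ℤ) ^ 3
        - t * ((q : ℤ) ^ 3 + 1) ∧
      ∀ Q, Q ≠ C.P0 → Q ≠ C.Pinf → 0 ≤ C.v Q f → 0 ≤ C.v Q g := by
  obtain ⟨hy, hy0, hyi, hyQ⟩ := C.y_data hq
  obtain ⟨hz, hz0, hzi, hzQ⟩ := C.z_data hq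
  have hyu := pow_ne_zero u hy
  have hzw := pow_ne_zero w hz
  have hxt := zpow_ne_zero t C.x_ne
  have hv : ∀ Q, C.v Q (f * C.y ^ u * C.z ^ w * C.x ^ t) =
      C.v Q f + u * C.v Q C.y + w * C.v Q C.z + t * C.v Q C.x := by
    intro Q
    rw [C.v_mul Q _ _ (mul_ne_zero (mul_ne_zero hf hyu) hzw) hxt,
      C.v_mul Q _ _ (mul_ne_zero hf hyu) hzw, C.v_mul Q _ _ hf hyu,
      C.v_pow Q hy, C.v_pow Q hz, C.v_zpow Q C.x_ne]
  refine ⟨f * C.y ^ u * C.z ^ w * C.x ^ t,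
    mul_ne_zero (mul_ne_zero (mul_ne_zero hf hyu) hzw) hxt, ?_, ?_, ?_⟩
  · rw [hv, hy0, hz0, C.x_div_P0]
    ring
  · rw [hv, hyi, hzi, C.x_div_Pinf]
    ring
  · intro Q h0 hi hfQ
    rw [hv, C.x_div_other Q h0 hi, mul_zero, add_zero]
    exact add_nonneg (add_nonneg hfQ (mul_nonneg (Nat.cast_nonneg u) (hyQ Q h0 hi)))
      (mul_nonneg (Nat.cast_nonneg w) (hzQ Q h0 hi))

end GKData

/-! ### The gap `2g - 1` and the minimal total pole order -/

namespace GKData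

variable {q : ℕ} (C : GKData q)

/-- The number `2g - 1 = (q² - 2)(q³ + 1) + 1` is a gap at `P_∞`. -/
lemma gap_Pinf (hq : 2 ≤ q) : C.Gap C.Pinf ((q ^ 2 - 2) * (q ^ 3 + 1) + 1) := by
  intro h
  obtain ⟨a, b, c, h⟩ := (C.Hinf_gen _).1 h
  have hq2 : 4 ≤ q ^ 2 := by nlinarith
  have hq3 : q ^ 2 ≤ q ^ 3 := Nat.pow_le_pow_right (by omega) (by omega)
  zify [hq3, show 2 ≤ q ^ 2 by omega] at h
  have hQ : (2 : ℤ) ≤ q := by exact_mod_cast hq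
  have ha : (0 : ℤ) ≤ a := by positivity
  have hb : (0 : ℤ) ≤ b := by positivity
  have hc : (0 : ℤ) ≤ c := by positivity
  generalize (q : ℤ) = Q at *
  generalize (a : ℤ) = A at *
  generalize (b : ℤ) = B at *
  generalize (c : ℤ) = D at *
  -- `t` is the quotient of `A * m + B + 1` by `q³ + 1`, where `m = q² - q + 1`
  obtain ⟨t, ht⟩ : ∃ t, t = A + B + D - (Q ^ 2 - 2) := ⟨_, rfl⟩
  have hm : 0 < Q ^ 2 - Q := by nlinarith
  have h1 : A * (Q ^ 2 - Q + 1) + B + 1 = t * (Q ^ 3 + 1) := by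
    rw [ht]; linarith
  have ht1 : 1 ≤ t := by
    by_contra hlt
    have : t * (Q ^ 3 + 1) ≤ 0 := mul_nonpos_of_nonpos_of_nonneg (by omega) (by positivity)
    nlinarith [mul_nonneg ha hm.le]
  have hA : A ≤ t * (Q + 1) - 1 := by
    have : A * (Q ^ 2 - Q + 1) < (t * (Q + 1)) * (Q ^ 2 - Q + 1) := by linarith
    have := lt_of_mul_lt_mul_right this (by omega)
    omega
  have hA2 := mul_le_mul_of_nonneg_right hA hm.le
  nlinarith

/-- The same number is a gap at `P₀`: it is the first coordinate of the element of `Γ(P₀, P_∞)`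
with `k = q² - 1`, `i = q`, `j = q² - q`. -/
lemma gap_P0 (hq : 2 ≤ q) : C.Gap C.P0 ((q ^ 2 - 2) * (q ^ 3 + 1) + 1) := by
  have hqm : 2 * q ≤ q ^ 2 := by nlinarith
  have h : ((q ^ 2 - 2) * (q ^ 3 + 1) + 1,
      (q + (q ^ 2 - q) - (q ^ 2 - 1 + 1)) * (q ^ 3 + 1) + (q + 1 - q) * (q ^ 2 - q + 1)
        - (q ^ 2 - q)) ∈ C.GammaSet C.P0 C.Pinf := by
    rw [C.gamma_desc]
    refine ⟨q ^ 2 - 1, q, q ^ 2 - q, by omega, by omega, by omega, le_rfl, by omega, le_rfl, ?_⟩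
    have e1 : q ^ 2 - 1 - 1 = q ^ 2 - 2 := by omega
    have e2 : q + 1 - q = 1 := by omega
    rw [e1, e2, one_mul]
    congr 1
    omega
  exact h.1

/-- If `f` is regular outside `P₀, P_∞` and its pole order at `P_∞` is `≡ -(i m + j)`, then its
two pole orders add up to at least those of `y ^ i * z ^ j`. Otherwise the product with the
complementary monomial `y ^ (q - i) * z ^ (q² - q - j)` and a power of `x` has its only pole at
`P_∞`, of order `2g - 1`. -/
lemma degree_bound_Pinf (hq : 2 ≤ q) (f : C.F) (hf : f ≠ 0)
    (hreg : ∀ Q, Q ≠ C.P0 → Q ≠ C.Pinf → 0 ≤ C.v Q f) (i j : ℕ) (hi : i ≤ q)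
    (hj : j ≤ q ^ 2 - q) (c : ℤ)
    (hv : C.v C.Pinf f = -(c * ((q : ℤ) ^ 3 + 1) - (i * ((q : ℤ) ^ 2 - q + 1) + j))) :
    (i + j) * ((q : ℤ) ^ 3 + 1) - 2 * (i * ((q : ℤ) ^ 2 - q + 1) + j) ≤
      -C.v C.P0 f - C.v C.Pinf f := by
  by_contra! hlt
  have hqm : 2 * q ≤ q ^ 2 := by nlinarith
  obtain ⟨g, hg, hg0, hgi, hgQ⟩ := C.exists_mul_monomial hq f hf (q - i) (q ^ 2 - q - j)
    (-(c - (i + j) + 1))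
  rw [Nat.cast_sub hi] at hg0 hgi
  rw [Nat.cast_sub hj, Nat.cast_sub (by omega : q ≤ q ^ 2), Nat.cast_pow] at hg0 hgi
  refine C.gap_Pinf hq ⟨g, hg, ?_, fun Q hQ => ?_⟩
  · rw [hgi, hv, Nat.cast_add, Nat.cast_mul, Nat.cast_sub (by omega : 2 ≤ q ^ 2)]
    push_cast
    ring
  · by_cases hQ0 : Q = C.P0
    · rw [hQ0]
      have : -1 < C.v C.P0 g := by rw [hg0]; linarith
      omega
    · exact hgQ Q hQ0 hQ (hreg Q hQ0 hQ)

/-- The counterpart of `degree_bound_Pinf` with the congruence at `P₀`. -/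
lemma degree_bound_P0 (hq : 2 ≤ q) (f : C.F) (hf : f ≠ 0)
    (hreg : ∀ Q, Q ≠ C.P0 → Q ≠ C.Pinf → 0 ≤ C.v Q f) (i j : ℕ) (hi : i ≤ q)
    (hj : j ≤ q ^ 2 - q) (c : ℤ)
    (hv : C.v C.P0 f = -(c * ((q : ℤ) ^ 3 + 1) - (i * ((q : ℤ) ^ 2 - q + 1) + j))) :
    (i + j) * ((q : ℤ) ^ 3 + 1) - 2 * (i * ((q : ℤ) ^ 2 - q + 1) + j) ≤
      -C.v C.P0 f - C.v C.Pinf f := by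
  by_contra! hlt
  have hqm : 2 * q ≤ q ^ 2 := by nlinarith
  obtain ⟨g, hg, hg0, hgi, hgQ⟩ := C.exists_mul_monomial hq f hf (q - i) (q ^ 2 - q - j)
    (-((q : ℤ) ^ 2 - c - 1))
  rw [Nat.cast_sub hi] at hg0 hgi
  rw [Nat.cast_sub hj, Nat.cast_sub (by omega : q ≤ q ^ 2), Nat.cast_pow] at hg0 hgi
  refine C.gap_P0 hq ⟨g, hg, ?_, fun Q hQ => ?_⟩
  · rw [hg0, hv, Nat.cast_add, Nat.cast_mul, Nat.cast_sub (by omega : 2 ≤ q ^ 2)]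
    push_cast
    ring
  · by_cases hQi : Q = C.Pinf
    · rw [hQi]
      have : -1 < C.v C.Pinf g := by rw [hgi]; linarith
      omega
    · exact hgQ Q hQ hQi (hreg Q hQ hQi)

/-- Pure gaps in terms of residues modulo `q³ + 1`: with `sₐ ≡ -(iₐ m + jₐ)`, the sum `s₁ + s₂`
lies below the total pole order of both `y ^ i₁ * z ^ j₁` and `y ^ i₂ * z ^ j₂`. -/
lemma pureGap_iff (hq : 2 ≤ q) (s1 s2 : ℕ) (i1 j1 i2 j2 : ℕ) (hi1 : i1 ≤ q)
    (hj1 : j1 ≤ q ^ 2 - q) (hi2 : i2 ≤ q) (hj2 : j2 ≤ q ^ 2 - q) (c1 c2 : ℤ)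
    (h1 : (s1 : ℤ) = c1 * ((q : ℤ) ^ 3 + 1) - (i1 * ((q : ℤ) ^ 2 - q + 1) + j1))
    (h2 : (s2 : ℤ) = c2 * ((q : ℤ) ^ 3 + 1) - (i2 * ((q : ℤ) ^ 2 - q + 1) + j2)) :
    C.PureGap C.P0 C.Pinf (s1, s2) ↔
      (s1 : ℤ) + s2 < (i1 + j1) * ((q : ℤ) ^ 3 + 1) - 2 * (i1 * ((q : ℤ) ^ 2 - q + 1) + j1) ∧
      (s1 : ℤ) + s2 < (i2 + j2) * ((q : ℤ) ^ 3 + 1) - 2 * (i2 * ((q : ℤ) ^ 2 - q + 1) + j2) := by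
  unfold FnField.PureGap
  refine and_congr ?_ ?_
  · rw [← not_le, not_iff_not]
    constructor
    · rintro ⟨f, hf, hf0, hfi, hreg⟩
      have := C.degree_bound_P0 hq f hf hreg i1 j1 hi1 hj1 c1 (by rw [hf0, h1])
      simp only at hf0 hfi
      linarith
    · intro h
      obtain ⟨g, hg, hg0, hgi, hgQ⟩ := C.exists_mul_monomial hq 1 one_ne_zero i1 j1 (-c1)
      rw [C.v_one] at hg0 hgi
      refine ⟨g, hg, by simp only; linarith, by simp only; linarith, fun Q h0 hi => ?_⟩
      exact hgQ Q h0 hi (by rw [C.v_one])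
  · rw [← not_le, not_iff_not]
    constructor
    · rintro ⟨f, hf, hfi, hf0, hreg⟩
      have := C.degree_bound_Pinf hq f hf hreg i2 j2 hi2 hj2 c2 (by rw [hfi, h2])
      simp only at hf0 hfi
      linarith
    · intro h
      obtain ⟨g, hg, hg0, hgi, hgQ⟩ := C.exists_mul_monomial hq 1 one_ne_zero i2 j2
        (c2 - (i2 + j2))
      rw [C.v_one] at hg0 hgi
      refine ⟨g, hg, by simp only; linarith, by simp only; linarith, fun Q h0 hi => ?_⟩
      exact hgQ Q h0 hi (by rw [C.v_one])

end GKData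

/-! ### Summing over residues -/

/-- The number of pairs `c₁, c₂ ≥ 1` with `c₁ + c₂ ≤ M`, as a polynomial expression in `M`. -/
def gkTri (M : ℕ) : ℚ := (M : ℚ) * ((M : ℚ) - 1) / 2

/-- For `n = i * m + j` with `j < m`, the sum `i + j`. -/
def gkW (m n : ℕ) : ℕ := n / m + n % m

/-- The largest value of `c₁ + c₂` for which `(c₁π - n₁, c₂π - n₂)` is a pure gap. -/
def gkM (m n1 n2 : ℕ) : ℕ :=
  if n1 = n2 then gkW m n1 - 1
  else if n1 < n2 then min (gkW m n1) (gkW m n2 - 1)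
  else min (gkW m n1 - 1) (gkW m n2)

lemma gkM_comm (m n1 n2 : ℕ) : gkM m n1 n2 = gkM m n2 n1 := by
  unfold gkM
  rcases lt_trichotomy n1 n2 with h | h | h
  · rw [if_neg h.ne, if_pos h, if_neg h.ne', if_neg h.not_gt, min_comm]
  · subst h; rfl
  · rw [if_neg h.ne', if_neg h.not_gt, if_neg h.ne, if_pos h, min_comm]

lemma gkW_block (m i j : ℕ) (hj : j < m) : gkW m (i * m + j) = i + j := by
  unfold gkW
  rw [Nat.mul_comm i m, Nat.mul_add_div (by omega), Nat.mul_add_mod, Nat.div_eq_of_lt hj,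
    Nat.mod_eq_of_lt hj]
  omega

lemma sum_square_symm (f : ℕ → ℕ → ℚ) (hf : ∀ a b, f a b = f b a) (K : ℕ) :
    ∑ a ∈ Finset.range K, ∑ b ∈ Finset.range K, f a b =
      ∑ a ∈ Finset.range K, f a a +
        2 * ∑ a ∈ Finset.range K, ∑ b ∈ Finset.range a, f b a := by
  induction K with
  | zero => simp
  | succ K ih =>
    simp only [Finset.sum_range_succ, Finset.sum_add_distrib] at ih ⊢
    rw [ih, Finset.sum_congr rfl (fun b _ => hf K b)]
    ring

lemma sum_range_blocks (f : ℕ → ℚ) (m K : ℕ) :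
    ∑ n ∈ Finset.range (K * m), f n =
      ∑ i ∈ Finset.range K, ∑ j ∈ Finset.range m, f (i * m + j) := by
  induction K with
  | zero => simp
  | succ K ih =>
    rw [Finset.sum_range_succ, ← ih, Nat.succ_mul, Finset.sum_range_add]

lemma sum_below_diag_blocks (f : ℕ → ℕ → ℚ) (m K : ℕ) :
    ∑ n2 ∈ Finset.range (K * m), ∑ n1 ∈ Finset.range n2, f n1 n2 =
      ∑ i2 ∈ Finset.range K, ∑ i1 ∈ Finset.range i2,
        ∑ j1 ∈ Finset.range m, ∑ j2 ∈ Finset.range m, f (i1 * m + j1) (i2 * m + j2) +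
      ∑ i ∈ Finset.range K, ∑ j2 ∈ Finset.range m, ∑ j1 ∈ Finset.range j2,
        f (i * m + j1) (i * m + j2) := by
  rw [sum_range_blocks, ← Finset.sum_add_distrib]
  refine Finset.sum_congr rfl fun i2 _ => ?_
  have h : ∀ j2, ∑ n1 ∈ Finset.range (i2 * m + j2), f n1 (i2 * m + j2) =
      ∑ i1 ∈ Finset.range i2, ∑ j1 ∈ Finset.range m, f (i1 * m + j1) (i2 * m + j2) +
      ∑ j1 ∈ Finset.range j2, f (i2 * m + j1) (i2 * m + j2) := by
    intro j2
    rw [Finset.sum_range_add, sum_range_blocks]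
  simp only [h, Finset.sum_add_distrib]
  congr 1
  rw [Finset.sum_comm]
  exact Finset.sum_congr rfl fun i1 _ => Finset.sum_comm

lemma sum_gkTri (c U : ℕ) :
    ∑ t ∈ Finset.range U, gkTri (c + t) =
      ((U : ℚ) ^ 3 + 3 * U ^ 2 * c - 3 * U ^ 2 + 3 * U * c ^ 2 - 6 * U * c + 2 * U) / 6 := by
  induction U with
  | zero => simp
  | succ U ih =>
    rw [Finset.sum_range_succ, ih, gkTri]
    push_cast
    ring

lemma sum_gkTri_min_row (c u V : ℕ) (h : u ≤ V) :
    ∑ v ∈ Finset.range V, gkTri (c + min u v) =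
      ∑ v ∈ Finset.range u, gkTri (c + v) + ((V : ℚ) - u) * gkTri (c + u) := by
  obtain ⟨d, rfl⟩ := Nat.exists_eq_add_of_le h
  rw [Finset.sum_range_add]
  congr 1
  · refine Finset.sum_congr rfl fun v hv => ?_
    rw [min_eq_right (Finset.mem_range.1 hv).le]
  · simp

lemma sum_gkTri_min (c U V : ℕ) (h : U ≤ V) :
    ∑ u ∈ Finset.range U, ∑ v ∈ Finset.range V, gkTri (c + min u v) =
      (-(U : ℚ) ^ 4 + 2 * U ^ 3 * V - 2 * U ^ 3 * c + 2 * U ^ 3 + 6 * U ^ 2 * V * c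
        - 6 * U ^ 2 * V + U ^ 2 + 6 * U * V * c ^ 2 - 12 * U * V * c + 4 * U * V
        + 2 * U * c - 2 * U) / 12 := by
  induction U with
  | zero => simp
  | succ U ih =>
    rw [Finset.sum_range_succ, ih (by omega), sum_gkTri_min_row c U V (by omega), sum_gkTri, gkTri]
    push_cast
    ring

lemma sum_gkTri_shift (a e m : ℕ) (h : e ≤ m) :
    ∑ j1 ∈ Finset.range m, ∑ j2 ∈ Finset.range m, gkTri (a + min j1 (j2 + e)) =
      (6 * (a : ℚ) ^ 2 * m ^ 2 + 2 * a * e ^ 3 - 6 * a * e ^ 2 * m + 6 * a * e * m ^ 2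
        - 2 * a * e + 4 * a * m ^ 3 - 12 * a * m ^ 2 + 2 * a * m + e ^ 4 - 2 * e ^ 3 * m
        - 2 * e ^ 3 + 6 * e ^ 2 * m - e ^ 2 + 2 * e * m ^ 3 - 6 * e * m ^ 2 + 2 * e + m ^ 4
        - 4 * m ^ 3 + 5 * m ^ 2 - 2 * m) / 12 := by
  obtain ⟨U, rfl⟩ := Nat.exists_eq_add_of_le h
  rw [Finset.sum_range_add]
  have h1 : ∀ j1 ∈ Finset.range e,
      ∑ j2 ∈ Finset.range (e + U), gkTri (a + min j1 (j2 + e)) =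
        ((e + U : ℕ) : ℚ) * gkTri (a + j1) := by
    intro j1 hj1
    rw [Finset.mem_range] at hj1
    rw [Finset.sum_congr rfl (fun j2 _ => by rw [min_eq_left (by omega : j1 ≤ j2 + e)])]
    simp
  have h2 : ∀ u, ∀ j2, gkTri (a + min (e + u) (j2 + e)) = gkTri ((a + e) + min u j2) := by
    intro u j2
    congr 1
    omega
  rw [Finset.sum_congr rfl h1, ← Finset.mul_sum, sum_gkTri]
  simp only [h2]
  rw [sum_gkTri_min _ _ _ (by omega)]
  push_cast
  ring

lemma sum_offdiag_row (m k I : ℕ) (hI : I ≤ k) (hk : k ≤ m + 1) :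
    ∑ i1 ∈ Finset.range I, ∑ j1 ∈ Finset.range m, ∑ j2 ∈ Finset.range m,
        gkTri (min (i1 + j1) (k + j2 - 1)) =
      (10 * (m : ℚ) ^ 4 * I + 10 * m ^ 3 * I ^ 2 + 20 * m ^ 3 * I * k - 70 * m ^ 3 * I
        + 30 * m ^ 2 * I ^ 2 * k - 60 * m ^ 2 * I ^ 2 - 90 * m ^ 2 * I * k + 170 * m ^ 2 * I
        - 10 * m * I ^ 4 + 20 * m * I ^ 3 * k + 20 * m * I ^ 3 - 90 * m * I ^ 2 * k
        + 60 * m * I ^ 2 - 20 * m * I * k ^ 3 + 120 * m * I * k ^ 2 - 110 * m * I * k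
        - 10 * m * I - 2 * I ^ 5 + 5 * I ^ 4 * k + 5 * I ^ 4 - 30 * I ^ 3 * k + 20 * I ^ 3
        - 10 * I ^ 2 * k ^ 3 + 60 * I ^ 2 * k ^ 2 - 55 * I ^ 2 * k - 5 * I ^ 2 + 10 * I * k ^ 4
        - 50 * I * k ^ 3 + 50 * I * k ^ 2 + 20 * I * k - 18 * I) / 120 := by
  induction I with
  | zero => simp
  | succ I ih =>
    obtain ⟨e, rfl⟩ := Nat.exists_eq_add_of_le hI
    have h2 : ∀ j1 j2, gkTri (min (I + j1) (I + 1 + e + j2 - 1)) =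
        gkTri (I + min j1 (j2 + e)) := by
      intro j1 j2
      congr 1
      omega
    rw [Finset.sum_range_succ, ih (by omega)]
    simp only [h2]
    rw [sum_gkTri_shift _ _ _ (by omega)]
    push_cast
    ring

lemma sum_offdiag (m K : ℕ) (hK : K ≤ m + 2) :
    ∑ i2 ∈ Finset.range K, ∑ i1 ∈ Finset.range i2,
      ∑ j1 ∈ Finset.range m, ∑ j2 ∈ Finset.range m, gkTri (min (i1 + j1) (i2 + j2 - 1)) =
      (10 * (m : ℚ) ^ 4 * K ^ 2 - 10 * m ^ 4 * K + 20 * m ^ 3 * K ^ 3 - 100 * m ^ 3 * K ^ 2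
        + 80 * m ^ 3 * K + 15 * m ^ 2 * K ^ 4 - 130 * m ^ 2 * K ^ 3 + 335 * m ^ 2 * K ^ 2
        - 220 * m ^ 2 * K - 4 * m * K ^ 5 + 35 * m * K ^ 4 - 90 * m * K ^ 3 + 65 * m * K ^ 2
        - 6 * m * K + K ^ 6 - 9 * K ^ 5 + 25 * K ^ 4 - 15 * K ^ 3 - 26 * K ^ 2 + 24 * K) / 240 := by
  induction K with
  | zero => simp
  | succ K ih =>
    rw [Finset.sum_range_succ, ih (by omega), sum_offdiag_row m K K le_rfl (by omega)]
    push_cast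
    ring

lemma sum_diag_block_row (m i : ℕ) :
    ∑ j2 ∈ Finset.range m, ∑ j1 ∈ Finset.range j2, gkTri (i + j1) =
      ((m : ℚ) ^ 4 + 4 * m ^ 3 * i - 6 * m ^ 3 + 6 * m ^ 2 * i ^ 2 - 18 * m ^ 2 * i
        + 11 * m ^ 2 - 6 * m * i ^ 2 + 14 * m * i - 6 * m) / 24 := by
  induction m with
  | zero => simp
  | succ m ih =>
    rw [Finset.sum_range_succ, ih, sum_gkTri]
    push_cast
    ring

lemma sum_diag_block (m K : ℕ) :
    ∑ i ∈ Finset.range K, ∑ j2 ∈ Finset.range m, ∑ j1 ∈ Finset.range j2, gkTri (i + j1) =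
      ((m : ℚ) ^ 4 * K + 2 * m ^ 3 * K ^ 2 - 8 * m ^ 3 * K + 2 * m ^ 2 * K ^ 3
        - 12 * m ^ 2 * K ^ 2 + 21 * m ^ 2 * K - 2 * m * K ^ 3 + 10 * m * K ^ 2
        - 14 * m * K) / 24 := by
  induction K with
  | zero => simp
  | succ K ih =>
    rw [Finset.sum_range_succ, ih, sum_diag_block_row]
    push_cast
    ring

lemma sum_diag (m K : ℕ) (hm : 1 ≤ m) :
    ∑ i ∈ Finset.range (K + 1), ∑ j ∈ Finset.range m, gkTri (i + j - 1) =
      (2 * (m : ℚ) ^ 3 * K + 3 * m ^ 2 * K ^ 2 - 9 * m ^ 2 * K + 2 * m * K ^ 3 - 9 * m * K ^ 2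
        + 11 * m * K) / 12 + ((m : ℚ) ^ 3 - 6 * m ^ 2 + 11 * m - 6) / 6 := by
  induction K with
  | zero =>
    obtain ⟨m, rfl⟩ := Nat.exists_eq_add_of_le' hm
    rw [Finset.sum_range_one, Finset.sum_range_succ']
    have h : ∀ j, gkTri (0 + (j + 1) - 1) = gkTri (0 + j) := fun _ => rfl
    simp only [h, sum_gkTri]
    simp [gkTri]
    ring
  | succ K ih =>
    have h : ∀ j, gkTri (K + 1 + j - 1) = gkTri (K + j) := fun j => by congr 1; omega
    rw [Finset.sum_range_succ, ih]
    simp only [h, sum_gkTri]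
    push_cast
    ring

/-- The total count. Off the diagonal the summand is symmetric, so only `n₁ < n₂` matters, where
the minimum is `i + j₁` inside a block and `min (i₁ + j₁) (i₂ + j₂ - 1)` across blocks. -/
lemma sum_gkM (q : ℕ) (hq : 2 ≤ q) :
    ∑ n1 ∈ Finset.range ((q + 1) * (q ^ 2 - q + 1)),
      ∑ n2 ∈ Finset.range ((q + 1) * (q ^ 2 - q + 1)), gkTri (gkM (q ^ 2 - q + 1) n1 n2) =
      (q : ℚ) * ((q : ℚ) - 1) *
        (10 * (q : ℚ) ^ 8 + 10 * (q : ℚ) ^ 7 - 25 * (q : ℚ) ^ 6 - 9 * (q : ℚ) ^ 5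
          + 71 * (q : ℚ) ^ 4 - 111 * (q : ℚ) ^ 3 - 86 * (q : ℚ) ^ 2
          + 128 * (q : ℚ) - 12) / 120 := by
  have hqm : 2 * q ≤ q ^ 2 := by nlinarith
  have hcast : ((q ^ 2 - q + 1 : ℕ) : ℚ) = (q : ℚ) ^ 2 - q + 1 := by
    rw [Nat.cast_add, Nat.cast_sub (by omega)]
    push_cast
    ring
  set m := q ^ 2 - q + 1 with hm
  have hm1 : 1 ≤ m := by omega
  rw [sum_square_symm (fun a b => gkTri (gkM m a b)) (fun a b => by rw [gkM_comm]),
    sum_below_diag_blocks, sum_range_blocks]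
  have hD : ∀ i ∈ Finset.range (q + 1), ∑ j ∈ Finset.range m,
      gkTri (gkM m (i * m + j) (i * m + j)) = ∑ j ∈ Finset.range m, gkTri (i + j - 1) := by
    intro i _
    refine Finset.sum_congr rfl fun j hj => ?_
    rw [gkM, if_pos rfl, gkW_block _ _ _ (Finset.mem_range.1 hj)]
  have hE1 : ∀ i ∈ Finset.range (q + 1), ∑ j2 ∈ Finset.range m, ∑ j1 ∈ Finset.range j2,
      gkTri (gkM m (i * m + j1) (i * m + j2)) =
        ∑ j2 ∈ Finset.range m, ∑ j1 ∈ Finset.range j2, gkTri (i + j1) := by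
    intro i _
    refine Finset.sum_congr rfl fun j2 hj2 => Finset.sum_congr rfl fun j1 hj1 => ?_
    rw [Finset.mem_range] at hj1 hj2
    rw [gkM, if_neg (by omega), if_pos (by omega), gkW_block _ _ _ hj2,
      gkW_block _ _ _ (by omega), min_eq_left (by omega)]
  have hE2 : ∀ i2 ∈ Finset.range (q + 1), ∑ i1 ∈ Finset.range i2,
      ∑ j1 ∈ Finset.range m, ∑ j2 ∈ Finset.range m,
        gkTri (gkM m (i1 * m + j1) (i2 * m + j2)) =
      ∑ i1 ∈ Finset.range i2, ∑ j1 ∈ Finset.range m, ∑ j2 ∈ Finset.range m,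
        gkTri (min (i1 + j1) (i2 + j2 - 1)) := by
    intro i2 _
    refine Finset.sum_congr rfl fun i1 hi1 => Finset.sum_congr rfl fun j1 hj1 =>
      Finset.sum_congr rfl fun j2 hj2 => ?_
    rw [Finset.mem_range] at hi1 hj1 hj2
    have : (i1 + 1) * m ≤ i2 * m := Nat.mul_le_mul_right _ hi1
    have hlt : i1 * m + j1 < i2 * m + j2 := by
      rw [Nat.succ_mul] at this
      omega
    rw [gkM, if_neg hlt.ne, if_pos hlt, gkW_block _ _ _ hj1, gkW_block _ _ _ hj2]
  rw [Finset.sum_congr rfl hD, Finset.sum_congr rfl hE1, Finset.sum_congr rfl hE2,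
    sum_diag _ _ hm1, sum_diag_block, sum_offdiag _ _ (by omega)]
  push_cast [hcast]
  ring

/-! ### Counting pure gaps by residue classes -/

lemma mul_lt_iff_of_abs_lt(p r D : ℤ) (h1 : -p < r) (h2 : r < p) :
    D * p < r ↔ D < 0 ∨ (D = 0 ∧ 0 < r) := by
  rcases lt_trichotomy D 0 with h | h | h
  · have : D * p < r := by nlinarith
    simp [this, h]
  · simp [h]
  · have : ¬ D * p < r := by nlinarith
    simp [this, h.not_gt, h.ne']

namespace GKData

variable {q : ℕ} (C : GKData q)

lemma pureGap_iff_gkM (hq : 2 ≤ q) (s1 s2 c1 c2 n1 n2 : ℕ)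
    (hn1 : n1 < (q + 1) * (q ^ 2 - q + 1)) (hn2 : n2 < (q + 1) * (q ^ 2 - q + 1))
    (h1 : s1 + n1 = c1 * ((q + 1) * (q ^ 2 - q + 1)))
    (h2 : s2 + n2 = c2 * ((q + 1) * (q ^ 2 - q + 1))) :
    C.PureGap C.P0 C.Pinf (s1, s2) ↔
      1 ≤ c1 ∧ 1 ≤ c2 ∧ c1 + c2 ≤ gkM (q ^ 2 - q + 1) n1 n2 := by
  have hqm : 2 * q ≤ q ^ 2 := by nlinarith
  have hm : ((q ^ 2 - q + 1 : ℕ) : ℤ) = (q : ℤ) ^ 2 - q + 1 := by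
    rw [Nat.cast_add, Nat.cast_sub (by omega)]
    push_cast
    ring
  have hm0 : 0 < q ^ 2 - q + 1 := by omega
  have hj : ∀ n, n % (q ^ 2 - q + 1) ≤ q ^ 2 - q := fun n =>
    Nat.le_of_lt_succ (Nat.mod_lt _ hm0)
  have hi : ∀ n, n < (q + 1) * (q ^ 2 - q + 1) → n / (q ^ 2 - q + 1) ≤ q := fun n h =>
    Nat.le_of_lt_succ ((Nat.div_lt_iff_lt_mul hm0).2 h)
  have hn : ∀ n : ℕ, ((n / (q ^ 2 - q + 1) : ℕ) : ℤ) * ((q : ℤ) ^ 2 - q + 1) +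
      ((n % (q ^ 2 - q + 1) : ℕ) : ℤ) = n := by
    intro n
    rw [← hm]
    exact_mod_cast Nat.div_add_mod' n _
  have hp : (((q + 1) * (q ^ 2 - q + 1) : ℕ) : ℤ) = (q : ℤ) ^ 3 + 1 := by
    rw [Nat.cast_mul, hm]
    push_cast
    ring
  have hw : ∀ n : ℕ, ((n / (q ^ 2 - q + 1) : ℕ) : ℤ) + ((n % (q ^ 2 - q + 1) : ℕ) : ℤ) =
      (gkW (q ^ 2 - q + 1) n : ℕ) := by
    intro n
    rw [gkW]
    push_cast
    rfl
  have hw0 : gkW (q ^ 2 - q + 1) 0 = 0 := by simp [gkW]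
  have h1' : (s1 : ℤ) + n1 = c1 * ((q : ℤ) ^ 3 + 1) := by rw [← hp]; exact_mod_cast h1
  have h2' : (s2 : ℤ) + n2 = c2 * ((q : ℤ) ^ 3 + 1) := by rw [← hp]; exact_mod_cast h2
  have hn1' : (n1 : ℤ) < (q : ℤ) ^ 3 + 1 := by rw [← hp]; exact_mod_cast hn1
  have hn2' : (n2 : ℤ) < (q : ℤ) ^ 3 + 1 := by rw [← hp]; exact_mod_cast hn2
  rw [C.pureGap_iff hq s1 s2 _ _ _ _ (hi n1 hn1) (hj n1) (hi n2 hn2) (hj n2) c1 c2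
    (by rw [hn]; linarith) (by rw [hn]; linarith), hn, hn, hw, hw]
  have e1 := mul_lt_iff_of_abs_lt ((q : ℤ) ^ 3 + 1) (n2 - n1)
    (c1 + c2 - gkW (q ^ 2 - q + 1) n1) (by omega) (by omega)
  have e2 := mul_lt_iff_of_abs_lt ((q : ℤ) ^ 3 + 1) (n1 - n2)
    (c1 + c2 - gkW (q ^ 2 - q + 1) n2) (by omega) (by omega)
  have f1 : (s1 : ℤ) + s2 < (gkW (q ^ 2 - q + 1) n1 : ℕ) * ((q : ℤ) ^ 3 + 1) - 2 * n1 ↔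
      ((c1 : ℤ) + c2 - gkW (q ^ 2 - q + 1) n1) * ((q : ℤ) ^ 3 + 1) < n2 - n1 := by
    constructor <;> intro h <;> linarith
  have f2 : (s1 : ℤ) + s2 < (gkW (q ^ 2 - q + 1) n2 : ℕ) * ((q : ℤ) ^ 3 + 1) - 2 * n2 ↔
      ((c1 : ℤ) + c2 - gkW (q ^ 2 - q + 1) n2) * ((q : ℤ) ^ 3 + 1) < n1 - n2 := by
    constructor <;> intro h <;> linarith
  rw [f1, f2, e1, e2]
  -- a vanishing `c` forces the corresponding `n`, hence its weight, to vanish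
  have z1 : c1 = 0 → n1 = 0 := fun h => by rw [h, zero_mul] at h1; omega
  have z2 : c2 = 0 → n2 = 0 := fun h => by rw [h, zero_mul] at h2; omega
  have w1 : n1 = 0 → gkW (q ^ 2 - q + 1) n1 = 0 := fun h => by rw [h, hw0]
  have w2 : n2 = 0 → gkW (q ^ 2 - q + 1) n2 = 0 := fun h => by rw [h, hw0]
  unfold gkM
  rcases lt_trichotomy n1 n2 with h | h | h
  · rw [if_neg h.ne, if_pos h]
    omega
  · subst h
    rw [if_pos rfl]
    omega
  · rw [if_neg h.ne', if_neg h.not_gt]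
    omega

/-- The pure gap set is parametrized by residues `n₁, n₂ < q³ + 1` together with pairs
`c₁, c₂ ≥ 1`, `c₁ + c₂ ≤ gkM m n₁ n₂`, encoded as `s = c₁ + c₂ - 1` and `c = c₁ - 1 < s`. -/
lemma ncard_pureGapSet (hq : 2 ≤ q) :
    ((C.PureGapSet C.P0 C.Pinf).ncard : ℚ) =
      ∑ n1 ∈ Finset.range ((q + 1) * (q ^ 2 - q + 1)),
        ∑ n2 ∈ Finset.range ((q + 1) * (q ^ 2 - q + 1)), gkTri (gkM (q ^ 2 - q + 1) n1 n2) := by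
  have hiff := fun s1 s2 c1 c2 n1 n2 => C.pureGap_iff_gkM hq s1 s2 c1 c2 n1 n2
  have hp0 : 0 < (q + 1) * (q ^ 2 - q + 1) := by positivity
  generalize (q + 1) * (q ^ 2 - q + 1) = p at *
  generalize q ^ 2 - q + 1 = m at *
  let T : Finset (Σ _ : ℕ × ℕ, Σ _ : ℕ, ℕ) :=
    (Finset.range p ×ˢ Finset.range p).sigma fun n =>
      (Finset.range (gkM m n.1 n.2)).sigma fun s => Finset.range s
  let φ : (Σ _ : ℕ × ℕ, Σ _ : ℕ, ℕ) → ℕ × ℕ := fun t =>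
    ((t.2.2 + 1) * p - t.1.1, (t.2.1 - t.2.2) * p - t.1.2)
  have huniq : ∀ s c c' n n' : ℕ, n < p → n' < p → s + n = c * p → s + n' = c' * p →
      c = c' ∧ n = n' := by
    intro s c c' n n' hn hn' h h'
    have hc : c = c' := by
      by_contra hne
      rcases lt_or_gt_of_ne hne with hl | hl
      · have := Nat.mul_le_mul_right p (Nat.succ_le_of_lt hl)
        rw [Nat.succ_mul] at this
        omega
      · have := Nat.mul_le_mul_right p (Nat.succ_le_of_lt hl)
        rw [Nat.succ_mul] at this
        omega
    subst hc
    exact ⟨rfl, by omega⟩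
  have hrep : ∀ s : ℕ, ∃ c n, n < p ∧ s + n = c * p := by
    intro s
    have h1 := Nat.div_add_mod' s p
    have h2 := Nat.mod_lt s hp0
    by_cases h0 : s % p = 0
    · exact ⟨s / p, 0, hp0, by omega⟩
    · exact ⟨s / p + 1, p - s % p, by omega, by rw [Nat.succ_mul]; omega⟩
  have hφ : ∀ t ∈ T, t.1.1 < p ∧ t.1.2 < p ∧ t.2.1 < gkM m t.1.1 t.1.2 ∧ t.2.2 < t.2.1 ∧
      (φ t).1 + t.1.1 = (t.2.2 + 1) * p ∧ (φ t).2 + t.1.2 = (t.2.1 - t.2.2) * p := by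
    intro t ht
    simp only [T, Finset.mem_sigma, Finset.mem_product, Finset.mem_range] at ht
    obtain ⟨⟨a, b⟩, c, d⟩ := ht
    have h1 : p ≤ (t.2.2 + 1) * p := Nat.le_mul_of_pos_left _ (by omega)
    have h2 : p ≤ (t.2.1 - t.2.2) * p := Nat.le_mul_of_pos_left _ (by omega)
    exact ⟨a, b, c, d, by simp only [φ]; omega, by simp only [φ]; omega⟩
  have hinj : Set.InjOn φ T := by
    intro t ht t' ht' he
    obtain ⟨a, b, -, d, e, f⟩ := hφ t ht
    obtain ⟨a', b', -, d', e', f'⟩ := hφ t' ht'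
    rw [← he] at e' f'
    obtain ⟨h1, h2⟩ := huniq _ _ _ _ _ a a' e e'
    obtain ⟨h3, h4⟩ := huniq _ _ _ _ _ b b' f f'
    obtain ⟨⟨n1, n2⟩, s, c⟩ := t
    obtain ⟨⟨n1', n2'⟩, s', c'⟩ := t'
    simp only at h1 h2 h3 h4 d d'
    obtain rfl : c = c' := by omega
    obtain rfl : s = s' := by omega
    subst h2 h4
    rfl
  have hset : C.PureGapSet C.P0 C.Pinf = ((T.image φ : Finset (ℕ × ℕ)) : Set (ℕ × ℕ)) := by
    ext ⟨s1, s2⟩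
    rw [Finset.mem_coe, Finset.mem_image]
    constructor
    · intro hs
      obtain ⟨c1, n1, hn1, h1⟩ := hrep s1
      obtain ⟨c2, n2, hn2, h2⟩ := hrep s2
      obtain ⟨k1, k2, k3⟩ := (hiff s1 s2 c1 c2 n1 n2 hn1 hn2 h1 h2).1 hs
      refine ⟨⟨(n1, n2), c1 + c2 - 1, c1 - 1⟩, ?_, ?_⟩
      · simp only [T, Finset.mem_sigma, Finset.mem_product, Finset.mem_range]
        omega
      · have r1 : c1 - 1 + 1 = c1 := by omega
        have r2 : c1 + c2 - 1 - (c1 - 1) = c2 := by omega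
        simp only [φ, r1, r2, Prod.mk.injEq]
        omega
    · rintro ⟨t, ht, he⟩
      obtain ⟨a, b, c, d, e, f⟩ := hφ t ht
      rw [he] at e f
      exact (hiff s1 s2 _ _ _ _ a b e f).2 (by omega)
  rw [hset, Set.ncard_coe_finset, Finset.card_image_of_injOn hinj, Finset.card_sigma,
    Finset.sum_product]
  push_cast
  refine Finset.sum_congr rfl fun n1 _ => Finset.sum_congr rfl fun n2 _ => ?_
  rw [Finset.card_sigma]
  simp only [Finset.card_range]
  rw [gkTri]
  generalize gkM m n1 n2 = M
  induction M with
  | zero => simp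
  | succ M ih =>
    rw [Finset.sum_range_succ, Nat.cast_add, ih]
    push_cast
    ring

end GKData

/-- For a prime power `q ≥ 2`, the pure gap set of the GK
function field at `P₀` and `P_∞` has cardinality
`q(q-1)(10q⁸+10q⁷-25q⁶-9q⁵+71q⁴-111q³-86q²+128q-12)/120`. -/
theorem gk_pureGapSet_card (q : ℕ) (hq : 2 ≤ q)
    (hpp : ∃ p n : ℕ, p.Prime ∧ 0 < n ∧ q = p ^ n) (C : GKData q) :
    ((C.toFnField.PureGapSet C.P0 C.Pinf).ncard : ℚ) =
      (q : ℚ) * ((q : ℚ) - 1) *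
        (10 * (q : ℚ) ^ 8 + 10 * (q : ℚ) ^ 7 - 25 * (q : ℚ) ^ 6 - 9 * (q : ℚ) ^ 5
          + 71 * (q : ℚ) ^ 4 - 111 * (q : ℚ) ^ 3 - 86 * (q : ℚ) ^ 2
          + 128 * (q : ℚ) - 12) / 120 := by
  rw [C.ncard_pureGapSet hq, sum_gkM q hq]
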